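/- Fix a positive integer m and s = (α,β) ∈ ℚ², and define the completed Appell–Lerch sum Â^s_m(τ,z) := A^s_m(τ,z) + ∑_{ℓ=0}^{2m−1} Θ^{s,*}_{m,ℓ}(τ)·θ_{m,ℓ}(τ,z). Then: (1) Â^{(α+λ,β+μ)}_m = e(−m(μα−λβ))·Â^{(α,β)}_m for all λ,μ ∈ ℤ; (2) Â^s_m(τ, z+λτ+μ) = e(−m(λ²τ+2λz))·Â^s_m(τ,z) for all λ,μ ∈ ℤ; (3) Â^s_m((aτ+b)/(cτ+d), z/(cτ+d)) = (cτ+d)·e(mcz²/(cτ+d))·Â^{sγ}_m(τ,z) for every γ = (a,b;c,d) ∈ SL(2,ℤ), where sγ := (αa+βc, αb+βd). -/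

import Mathlib

noncomputable section

open Complex Filter Topology MeasureTheory
open scoped Classical

/-- `ee x = e^{2πix}`. -/
def ee (x : ℂ) : ℂ := Complex.exp (2 * (Real.pi : ℂ) * Complex.I * x)

/-- The index-`m` elliptic transformation law on `ℍ × ℂ`. -/
def EllipticLaw (m : ℕ) (φ : ℂ → ℂ → ℂ) : Prop :=
  ∀ τ : ℂ, 0 < τ.im → ∀ z : ℂ, ∀ lam mu : ℤ,
    φ τ (z + (lam : ℂ) * τ + (mu : ℂ)) =
      ee (-(m : ℂ) * ((lam : ℂ) ^ 2 * τ + 2 * (lam : ℂ) * z)) * φ τ z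

/-- The weight-`k` index-`m` modular transformation law on `ℍ × ℂ`. -/
def ModularLaw (k : ℤ) (m : ℕ) (φ : ℂ → ℂ → ℂ) : Prop :=
  ∀ τ : ℂ, 0 < τ.im → ∀ z : ℂ, ∀ a b c d : ℤ, a * d - b * c = 1 →
    φ (((a : ℂ) * τ + (b : ℂ)) / ((c : ℂ) * τ + (d : ℂ))) (z / ((c : ℂ) * τ + (d : ℂ))) =
      ((c : ℂ) * τ + (d : ℂ)) ^ k *
        ee ((m : ℂ) * (c : ℂ) * z ^ 2 / ((c : ℂ) * τ + (d : ℂ))) * φ τ z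

/-- The theta function `θ_{m,ℓ}(τ,z) = ∑_{r ≡ ℓ (mod 2m)} q^{r²/4m} y^r`. -/
def jTheta (m : ℕ) (l : ℤ) (τ z : ℂ) : ℂ :=
  ∑' n : ℤ, ee (((l : ℂ) + 2 * (m : ℂ) * (n : ℂ)) ^ 2 / (4 * (m : ℂ)) * τ +
      ((l : ℂ) + 2 * (m : ℂ) * (n : ℂ)) * z)

/-- The point `z_s = ατ + β` for `s = (α,β) ∈ ℚ²`. -/
def zpt (s : ℚ × ℚ) (τ : ℂ) : ℂ := (s.1 : ℚ) * τ + (s.2 : ℚ)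

/-- The rational function `R_c`. -/
def Rc (c : ℝ) (y : ℂ) : ℂ :=
  if (⌈c⌉ : ℝ) = c then 1 / 2 * y ^ ⌈c⌉ * (y + 1) / (y - 1) else y ^ ⌈c⌉ / (y - 1)

/-- The index-`m` averaging operator `Av^{(m)}[F](τ,z) = ∑_{λ∈ℤ} q^{mλ²} y^{2mλ} F(q^λ y)`. -/
def Av (m : ℕ) (F : ℂ → ℂ) (τ z : ℂ) : ℂ :=
  ∑' lam : ℤ, ee ((m : ℂ) * (lam : ℂ) ^ 2 * τ + 2 * (m : ℂ) * (lam : ℂ) * z) *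
      F (ee ((lam : ℂ) * τ + z))

/-- The Appell–Lerch sum `A^s_m(τ,z) = e(-mα z_s)·Av^{(m)}[R_{-2mα}(y/y_s)]`. -/
def AppellA (m : ℕ) (s : ℚ × ℚ) (τ z : ℂ) : ℂ :=
  ee (-(m : ℂ) * (s.1 : ℚ) * zpt s τ) *
    Av m (fun w => Rc ((-(2 * (m : ℚ) * s.1) : ℚ) : ℝ) (w / ee (zpt s τ))) τ z

/-- The complementary error function. -/
def erfc (x : ℝ) : ℝ := 2 / Real.sqrt Real.pi * ∫ t in Set.Ioi x, Real.exp (-t ^ 2)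

/-- The element `λ = n + α + ℓ/2m` of `ℤ + α + ℓ/2m`. -/
def lamVal (m : ℕ) (s : ℚ × ℚ) (l : ℤ) (n : ℤ) : ℝ :=
  (n : ℝ) + (s.1 : ℝ) + (l : ℝ) / (2 * (m : ℝ))

/-- The Eichler integral `Θ^{s,*}_{m,ℓ}(τ)` of the weight-3/2 unary theta series. -/
def ThStar (m : ℕ) (s : ℚ × ℚ) (l : ℤ) (τ : ℂ) : ℂ :=
  ee ((m : ℂ) * (s.1 : ℚ) * (s.2 : ℚ)) / 2 *
    ∑' n : ℤ, (Real.sign (lamVal m s l n) : ℂ) *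
      ee (-(2 * (m : ℂ) * (s.2 : ℚ) * (lamVal m s l n : ℝ))) *
      (erfc (2 * |lamVal m s l n| * Real.sqrt (Real.pi * (m : ℝ) * τ.im)) : ℂ) *
      ee (-(m : ℂ) * (lamVal m s l n : ℝ) ^ 2 * τ)

/-- The completed Appell–Lerch sum `Â^s_m = A^s_m + ∑_{ℓ mod 2m} Θ^{s,*}_{m,ℓ}·θ_{m,ℓ}`. -/
def AhatA (m : ℕ) (s : ℚ × ℚ) (τ z : ℂ) : ℂ :=
  AppellA m s τ z + ∑ l ∈ Finset.range (2 * m), ThStar m s (l : ℤ) τ * jTheta m (l : ℤ) τ z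
/-!
Multiplying `R_c(e(x))` by `e(x) - 1` turns each Cauchy kernel `e(c(x + n)) / (x + n)` into an
integral of `e(v(x + n))` over `v ∈ [c, c + 1]`. Damping the kernels by Gaussians, applying Poisson
summation under the integral and integrating the dual Gaussians produces differences of signs,
which add up to `R_c`, minus differences of error functions, which are the coefficients of the
Eichler integrals `Θ^{s,*}_{m,ℓ}`. Hence, away from its poles, `Â^s_m` is `1/2πi` times an
absolutely convergent sum of Gaussian-damped Cauchy kernels over the translates of `z_s` by the
lattice `ℤτ + ℤ`. Translations and `SL(2,ℤ)` change each kernel only by an explicit factor and a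
phase, so all three transformation laws are reindexings of this sum.
-/

open scoped Real ComplexConjugate

section Exponential

lemma ee_add (x y : ℂ) : ee (x + y) = ee x * ee y := by
  rw [ee, ee, ee, ← Complex.exp_add, mul_add]

lemma ee_ne_zero (x : ℂ) : ee x ≠ 0 := Complex.exp_ne_zero _

lemma ee_eq_one_iff {x : ℂ} : ee x = 1 ↔ ∃ n : ℤ, x = n := by
  simp only [ee, Complex.exp_eq_one_iff, mul_comm _ x, mul_left_inj' Complex.two_pi_I_ne_zero]

lemma ee_add_intCast (x : ℂ) (n : ℤ) : ee (x + n) = ee x := by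
  rw [ee_add, ee_eq_one_iff.2 ⟨n, rfl⟩, mul_one]

lemma ee_intCast_mul (n : ℤ) (x : ℂ) : ee (n * x) = ee x ^ n := by
  rw [ee, ee, ← Complex.exp_int_mul, mul_left_comm]

lemma norm_ee (x : ℂ) : ‖ee x‖ = Real.exp (-2 * π * x.im) := by
  simp [ee, Complex.norm_exp]

lemma continuous_ee : Continuous ee := by
  unfold ee
  fun_prop

lemma ee_sub_one_mul_ee_div {w : ℂ} (hw : w ≠ 0) (t : ℝ) :
    (ee w - 1) * (ee (t * w) / w) = 2 * π * I * ∫ v in t..(t + 1), ee (v * w) := by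
  have hint : ∫ v in t..(t + 1), ee (v * w) =
      (ee ((t + 1) * w) - ee (t * w)) / (2 * π * I * w) := by
    have h := integral_exp_mul_complex (a := t) (b := t + 1) (mul_ne_zero two_pi_I_ne_zero hw)
    simpa [ee, mul_assoc, mul_comm w] using h
  rw [hint, add_mul, ee_add, one_mul]
  field [Complex.two_pi_I_ne_zero]

end Exponential

section GaussianSums

lemma summable_exp_neg_quadratic {a : ℝ} (ha : 0 < a) (b c : ℝ) :
    Summable fun n : ℤ => Real.exp (-a * n ^ 2 + b * n + c) := by
  have h := summable_pow_mul_jacobiTheta₂_term_bound (|b| / (2 * π)) (div_pos ha Real.pi_pos) 0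
  refine .of_nonneg_of_le (fun _ => Real.exp_nonneg _) (fun n => ?_) (h.mul_right (Real.exp c))
  rw [pow_zero, one_mul, ← Real.exp_add]
  gcongr
  have hb : b * n ≤ |b| * |(n : ℝ)| := (le_abs_self _).trans_eq (abs_mul b n)
  field_simp
  push_cast
  linarith

lemma summable_exp_neg_norm_sq_lattice {τ : ℂ} (hτ : 0 < τ.im) {c : ℝ} (hc : 0 < c) (w : ℂ) :
    Summable fun p : ℤ × ℤ => Real.exp (-c * ‖(p.1 * τ + p.2 + w : ℂ)‖ ^ 2) := by
  set δ := EisensteinSeries.r ⟨τ, hτ⟩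
  have hδ0 : 0 < δ := EisensteinSeries.r_pos _
  have hquad (k n : ℤ) : δ ^ 2 * (k ^ 2 + n ^ 2) ≤ 2 * ‖(k * τ + n : ℂ)‖ ^ 2 := by
    rcases eq_or_ne ![k, n] 0 with h | h
    · obtain ⟨rfl, rfl⟩ : k = 0 ∧ n = 0 := ⟨congrFun h 0, congrFun h 1⟩
      simp
    have hr : δ * ‖![k, n]‖ ≤ ‖(k * τ + n : ℂ)‖ := EisensteinSeries.r_mul_max_le ⟨τ, hτ⟩ h
    have hmax (i : Fin 2) : (![k, n] i : ℝ) ^ 2 ≤ ‖![k, n]‖ ^ 2 := by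
      rw [← sq_abs, ← Int.norm_eq_abs]
      gcongr
      exact norm_le_pi_norm _ i
    calc δ ^ 2 * (k ^ 2 + n ^ 2) ≤ δ ^ 2 * (‖![k, n]‖ ^ 2 + ‖![k, n]‖ ^ 2) := by
          exact mul_le_mul_of_nonneg_left (add_le_add (hmax 0) (hmax 1)) (sq_nonneg δ)
      _ = 2 * (δ * ‖![k, n]‖) ^ 2 := by ring
      _ ≤ _ := by gcongr
  have hsum := summable_exp_neg_quadratic (a := c * δ ^ 2 / 4) (by positivity) 0 (c * ‖w‖ ^ 2 / 2)
  refine .of_nonneg_of_le (fun _ => Real.exp_nonneg _) (fun p => ?_)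
    (hsum.mul_of_nonneg hsum (fun _ => Real.exp_nonneg _) (fun _ => Real.exp_nonneg _))
  rw [← Real.exp_add]
  gcongr
  have htri : ‖(p.1 * τ + p.2 : ℂ)‖ ^ 2 ≤ 2 * (‖(p.1 * τ + p.2 + w : ℂ)‖ ^ 2 + ‖w‖ ^ 2) := by
    refine le_trans ?_ add_sq_le
    gcongr
    simpa using norm_sub_le (p.1 * τ + p.2 + w : ℂ) w
  linear_combination c / 4 * hquad p.1 p.2 + c / 2 * htri

lemma hasSum_intervalIntegral_of_summable_integral_norm {ι E : Type*} [Countable ι]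
    [NormedAddCommGroup E] [NormedSpace ℝ E] {F : ι → ℝ → E} {μ : Measure ℝ}
    {a b : ℝ} (hab : a ≤ b) (hF : ∀ i, IntervalIntegrable (F i) μ a b)
    (hsum : Summable fun i => ∫ v in a..b, ‖F i v‖ ∂μ) :
    HasSum (fun i => ∫ v in a..b, F i v ∂μ) (∫ v in a..b, ∑' i, F i v ∂μ) := by
  simp only [intervalIntegral.integral_of_le hab] at hsum ⊢
  exact hasSum_integral_of_summable_integral_norm (fun i => (hF i).1) hsum

lemma tsum_gaussian_mul_ee {a : ℂ} (ha : 0 < a.re) (v x : ℂ) :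
    ∑' n : ℤ, cexp (-π * a * (x + n) ^ 2) * ee (v * (x + n)) =
      ∑' r : ℤ, 1 / a ^ (1 / 2 : ℂ) * cexp (-π / a * (r - v) ^ 2) * ee (r * x) := by
  have ha0 : a ≠ 0 := by
    rintro rfl
    simp at ha
  have hpoisson := Complex.tsum_exp_neg_quadratic ha (-a * x + I * v)
  have hleft (n : ℤ) : cexp (-π * a * (x + n) ^ 2) * ee (v * (x + n)) =
      cexp (-π * a * x ^ 2 + 2 * π * I * v * x) *
        cexp (-π * a * n ^ 2 + 2 * π * (-a * x + I * v) * n) := by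
    rw [ee, ← Complex.exp_add, ← Complex.exp_add]
    ring_nf
  have hright (r : ℤ) : 1 / a ^ (1 / 2 : ℂ) * cexp (-π / a * (r - v) ^ 2) * ee (r * x) =
      cexp (-π * a * x ^ 2 + 2 * π * I * v * x) *
        (1 / a ^ (1 / 2 : ℂ) * cexp (-π / a * (r + I * (-a * x + I * v)) ^ 2)) := by
    rw [mul_left_comm, mul_assoc, ee, ← Complex.exp_add, ← Complex.exp_add]
    congr 2
    field_simp
    linear_combination (a ^ 2 * x ^ 2 + v ^ 2 * I ^ 2 - v ^ 2 - 2 * v * a * x * I + 2 * v * r) *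
      Complex.I_sq
  simp_rw [hleft, hright, tsum_mul_left, hpoisson]

end GaussianSums

section ErrorFunction

lemma sign_mul_of_pos_left {c : ℝ} (hc : 0 < c) (x : ℝ) : Real.sign (c * x) = Real.sign x := by
  simp only [Real.sign, mul_pos_iff_of_pos_left hc, ← not_le, mul_nonneg_iff_of_pos_left hc]

lemma integrable_exp_neg_sq : Integrable fun t : ℝ => Real.exp (-t ^ 2) := by
  simpa using integrable_exp_neg_mul_sq one_pos

lemma integral_Ioi_zero_exp_neg_sq : ∫ t in Set.Ioi (0 : ℝ), Real.exp (-t ^ 2) = √π / 2 := by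
  simpa using integral_gaussian_Ioi 1

lemma erfc_nonneg (x : ℝ) : 0 ≤ erfc x :=
  mul_nonneg (by positivity) (integral_nonneg fun _ => Real.exp_nonneg _)

lemma erfc_le_exp_neg_sq {x : ℝ} (hx : 0 ≤ x) : erfc x ≤ Real.exp (-x ^ 2) := by
  have hshift : ∫ t in Set.Ioi x, Real.exp (-t ^ 2) =
      ∫ t in Set.Ioi (0 : ℝ), Real.exp (-(t + x) ^ 2) := by
    simpa using ((measurePreserving_add_right volume x).setIntegral_preimage_emb
      (measurableEmbedding_addRight x) (fun t : ℝ => Real.exp (-t ^ 2)) (Set.Ioi x)).symm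
  have hle : ∫ t in Set.Ioi (0 : ℝ), Real.exp (-(t + x) ^ 2) ≤ Real.exp (-x ^ 2) * (√π / 2) := by
    rw [← integral_Ioi_zero_exp_neg_sq, ← integral_const_mul]
    refine setIntegral_mono_on (integrable_exp_neg_sq.comp_add_right x).integrableOn
      (integrable_exp_neg_sq.const_mul _).integrableOn measurableSet_Ioi fun t ht => ?_
    rw [← Real.exp_add]
    gcongr
    linarith [mul_nonneg (Set.mem_Ioi.1 ht).le hx]
  calc erfc x ≤ 2 / √π * (Real.exp (-x ^ 2) * (√π / 2)) := by
        rw [erfc, hshift]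
        gcongr
    _ = Real.exp (-x ^ 2) := by field

lemma one_sub_erfc {x : ℝ} (hx : 0 ≤ x) :
    1 - erfc x = 2 / √π * ∫ t in 0..x, Real.exp (-t ^ 2) := by
  rw [← intervalIntegral.integral_Ioi_sub_Ioi integrable_exp_neg_sq.integrableOn hx,
    integral_Ioi_zero_exp_neg_sq, erfc]
  field

/-- The odd extension `sgn(x)·erfc(|x|)` of the complementary error function, which is
`sgn(x) - erf(x)`; the non-holomorphic coefficients of the completion are values of it. -/
def signErfc (x : ℝ) : ℝ := Real.sign x * erfc |x|

lemma signErfc_eq (x : ℝ) :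
    signErfc x = Real.sign x - 2 / √π * ∫ t in 0..x, Real.exp (-t ^ 2) := by
  rcases lt_trichotomy x 0 with hx | rfl | hx
  · have hodd : ∫ t in 0..(-x), Real.exp (-t ^ 2) = -∫ t in 0..x, Real.exp (-t ^ 2) := by
      have h := intervalIntegral.integral_comp_neg (a := 0) (b := x) fun t : ℝ => Real.exp (-t ^ 2)
      simp only [neg_sq, neg_zero] at h
      rw [intervalIntegral.integral_symm (-x) 0, h]
    have h := one_sub_erfc (neg_nonneg.2 hx.le)
    rw [signErfc, Real.sign_of_neg hx, abs_of_neg hx]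
    rw [hodd] at h
    linear_combination h
  · simp [signErfc]
  · rw [signErfc, Real.sign_of_pos hx, abs_of_pos hx]
    linear_combination -one_sub_erfc hx.le

lemma abs_signErfc_le (x : ℝ) : |signErfc x| ≤ Real.exp (-x ^ 2) := by
  have hsign : |Real.sign x| ≤ 1 := by
    rcases Real.sign_apply_eq x with h | h | h <;> simp [h]
  calc |signErfc x| = |Real.sign x| * erfc |x| := by
        rw [signErfc, abs_mul, abs_of_nonneg (erfc_nonneg _)]
    _ ≤ 1 * Real.exp (-|x| ^ 2) :=
        mul_le_mul hsign (erfc_le_exp_neg_sq (abs_nonneg x)) (erfc_nonneg _) zero_le_one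
    _ = Real.exp (-x ^ 2) := by rw [one_mul, sq_abs]

lemma signErfc_neg (x : ℝ) : signErfc (-x) = -signErfc x := by
  simp [signErfc, Real.sign_neg]

lemma integral_gaussian_eq_signErfc {κ : ℝ} (hκ : 0 < κ) (a b r : ℝ) :
    1 / √κ * ∫ v in a..b, Real.exp (-π / κ * (r - v) ^ 2) =
      1 / 2 * ((Real.sign (b - r) - Real.sign (a - r)) -
        (signErfc (√(π / κ) * (b - r)) - signErfc (√(π / κ) * (a - r)))) := by
  have hc : 0 < √(π / κ) := by positivity
  have hsubst : ∫ v in a..b, Real.exp (-π / κ * (r - v) ^ 2) =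
      (√(π / κ))⁻¹ * ∫ t in (√(π / κ) * (a - r))..(√(π / κ) * (b - r)), Real.exp (-t ^ 2) := by
    have h := intervalIntegral.integral_comp_mul_sub (a := a) (b := b)
      (fun t : ℝ => Real.exp (-t ^ 2)) hc.ne' (√(π / κ) * r)
    simp only [← mul_sub, smul_eq_mul, mul_pow, Real.sq_sqrt (div_pos Real.pi_pos hκ).le] at h
    rw [← h]
    congr! 3
    ring
  have hscale : 1 / √κ * (√(π / κ))⁻¹ = 1 / √π := by
    rw [Real.sqrt_div Real.pi_pos.le]
    field
  rw [hsubst, ← mul_assoc, hscale, signErfc_eq, signErfc_eq, sign_mul_of_pos_left hc,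
    sign_mul_of_pos_left hc, ← intervalIntegral.integral_interval_sub_left (a := 0)
      integrable_exp_neg_sq.intervalIntegrable integrable_exp_neg_sq.intervalIntegrable]
  ring

lemma summable_signErfc_mul_ee {c : ℝ} (hc : 0 < c) (t : ℝ) (x : ℂ) :
    Summable fun r : ℤ => (signErfc (c * (t - r)) : ℂ) * ee (r * x) := by
  refine .of_norm_bounded (summable_exp_neg_quadratic (pow_pos hc 2)
    (2 * c ^ 2 * t - 2 * π * x.im) (-c ^ 2 * t ^ 2)) fun r => ?_
  calc ‖(signErfc (c * (t - r)) : ℂ) * ee (r * x)‖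
      ≤ Real.exp (-(c * (t - r)) ^ 2) * Real.exp (-2 * π * (r * x.im)) := by
        rw [norm_mul, norm_ee, Complex.norm_real, Real.norm_eq_abs, ← Complex.ofReal_intCast,
          Complex.im_ofReal_mul]
        gcongr
        exact abs_signErfc_le _
    _ = _ := by
        rw [← Real.exp_add]
        ring_nf

end ErrorFunction

section PartialFractions

lemma hasSum_sign_sub_sign_mul_zpow (t : ℝ) {y : ℂ} (hy0 : y ≠ 0) (hy1 : y ≠ 1) :
    HasSum (fun r : ℤ => (Real.sign (t + 1 - r) - Real.sign (t - r) : ℂ) * y ^ r)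
      (2 * ((y - 1) * Rc t y)) := by
  have hy : y - 1 ≠ 0 := sub_ne_zero.2 hy1
  have hlt (r : ℤ) (hr : (r : ℝ) < t) :
      (Real.sign (t + 1 - r) - Real.sign (t - r) : ℂ) * y ^ r = 0 := by
    rw [Real.sign_of_pos (by linarith), Real.sign_of_pos (by linarith), sub_self, zero_mul]
  have hgt (r : ℤ) (hr : t + 1 < r) :
      (Real.sign (t + 1 - r) - Real.sign (t - r) : ℂ) * y ^ r = 0 := by
    rw [Real.sign_of_neg (by linarith), Real.sign_of_neg (by linarith), sub_self, zero_mul]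
  rw [Rc]
  split_ifs with ht
  · obtain ⟨k, rfl⟩ : ∃ k : ℤ, (k : ℝ) = t := ⟨_, ht⟩
    have hvalue : 2 * ((y - 1) * (1 / 2 * y ^ ⌈(k : ℝ)⌉ * (y + 1) / (y - 1))) =
        ∑ r ∈ {k, k + 1}, (Real.sign (k + 1 - r) - Real.sign (k - r) : ℂ) * y ^ r := by
      rw [Finset.sum_pair (by simp), zpow_add_one₀ hy0, Int.ceil_intCast]
      norm_num [Real.sign]
      field
    rw [hvalue]
    refine hasSum_sum_of_ne_finset_zero fun r hr => ?_
    simp only [Finset.mem_insert, Finset.mem_singleton, not_or] at hr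
    rcases lt_or_gt_of_ne hr.1 with h | h
    · exact hlt r (by exact_mod_cast h)
    · exact hgt r (by exact_mod_cast lt_of_le_of_ne h (Ne.symm hr.2))
  · have hlo : t < ⌈t⌉ := lt_of_le_of_ne (Int.le_ceil t) (Ne.symm ht)
    have hvalue : 2 * ((y - 1) * (y ^ ⌈t⌉ / (y - 1))) =
        (Real.sign (t + 1 - ⌈t⌉) - Real.sign (t - ⌈t⌉) : ℂ) * y ^ ⌈t⌉ := by
      rw [Real.sign_of_pos (by linarith [Int.ceil_lt_add_one t]), Real.sign_of_neg (by linarith)]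
      push_cast
      field
    rw [hvalue]
    refine hasSum_single _ fun r hr => ?_
    rcases lt_or_gt_of_ne hr with h | h
    · exact hlt r (Int.lt_ceil.1 h)
    · exact hgt r (by linarith [(by exact_mod_cast h : (⌈t⌉ : ℝ) + 1 ≤ r)])

variable {κ : ℝ} (hκ : 0 < κ) (t : ℝ) (x : ℂ)
include hκ

lemma hasSum_integral_gaussian_mul_ee :
    HasSum (fun n : ℤ => ∫ v in t..(t + 1), cexp (-π * κ * (x + n) ^ 2) * ee (v * (x + n)))
      (∫ v in t..(t + 1), ∑' n : ℤ, cexp (-π * κ * (x + n) ^ 2) * ee (v * (x + n))) := by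
  refine hasSum_intervalIntegral_of_summable_integral_norm (by simp)
    (fun n => Continuous.intervalIntegrable (continuous_const.mul
      (continuous_ee.comp (by fun_prop))) _ _) ?_
  have hnorm (n : ℤ) : ∫ v in t..(t + 1), ‖cexp (-π * κ * (x + n) ^ 2) * ee (v * (x + n))‖ =
      Real.exp (-(π * κ) * n ^ 2 + -(2 * π * κ * x.re) * n + -(π * κ) * (x.re ^ 2 - x.im ^ 2)) *
        ∫ v in t..(t + 1), Real.exp (-2 * π * (v * x.im)) := by
    rw [← intervalIntegral.integral_const_mul]
    congr! with _
    rw [norm_mul, norm_ee, Complex.norm_exp]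
    congr! 2
    · simp [sq]
      ring
    · simp
  simp_rw [hnorm]
  exact (summable_exp_neg_quadratic (by positivity) _ _).mul_right _

lemma hasSum_integral_dual_gaussian_mul_ee (hx : ∀ n : ℤ, x ≠ n) :
    HasSum (fun r : ℤ => ∫ v in t..(t + 1),
        (1 / √κ * Real.exp (-π / κ * (r - v) ^ 2) : ℝ) * ee (r * x))
      ((ee x - 1) * (Rc t (ee x) -
        1 / 2 * ∑' r : ℤ, signErfc (√(π / κ) * (t - r)) * ee (r * x))) := by
  have hx1 : ee x ≠ 1 := fun h => (ee_eq_one_iff.1 h).elim hx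
  have herr := (summable_signErfc_mul_ee (c := √(π / κ)) (by positivity) t x).hasSum
  have herr_shift : HasSum (fun r : ℤ => signErfc (√(π / κ) * (t + 1 - r)) * ee (r * x))
      (ee x * ∑' r : ℤ, signErfc (√(π / κ) * (t - r)) * ee (r * x)) := by
    rw [← (Equiv.addRight (1 : ℤ)).hasSum_iff]
    refine (herr.mul_left (ee x)).congr_fun fun r => ?_
    simp only [Function.comp, Equiv.coe_addRight, Int.cast_add, Int.cast_one, add_mul, one_mul,
      ee_add, add_sub_add_right_eq_sub]
    ring
  have hsign := hasSum_sign_sub_sign_mul_zpow t (ee_ne_zero x) hx1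
  have hvalue (S : ℂ) : (ee x - 1) * (Rc t (ee x) - 1 / 2 * S) =
      1 / 2 * (2 * ((ee x - 1) * Rc t (ee x)) - (ee x * S - S)) := by ring
  rw [hvalue]
  refine ((hsign.sub (herr_shift.sub herr)).mul_left (1 / 2)).congr_fun fun r => ?_
  rw [intervalIntegral.integral_mul_const, intervalIntegral.integral_ofReal,
    intervalIntegral.integral_const_mul, integral_gaussian_eq_signErfc hκ, ee_intCast_mul]
  push_cast
  ring

lemma integral_tsum_dual_gaussian_mul_ee (hx : ∀ n : ℤ, x ≠ n) :
    ∫ v in t..(t + 1), ∑' r : ℤ, (1 / √κ * Real.exp (-π / κ * (r - v) ^ 2) : ℝ) * ee (r * x) =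
      (ee x - 1) * (Rc t (ee x) -
        1 / 2 * ∑' r : ℤ, signErfc (√(π / κ) * (t - r)) * ee (r * x)) := by
  have hterms := hasSum_integral_dual_gaussian_mul_ee hκ t x hx
  refine (hasSum_intervalIntegral_of_summable_integral_norm (by simp)
    (fun r => Continuous.intervalIntegrable (by fun_prop) _ _) ?_).unique hterms
  refine hterms.summable.norm.congr fun r => ?_
  have hpos (v : ℝ) : 0 ≤ 1 / √κ * Real.exp (-π / κ * (r - v) ^ 2) := by positivity
  simp_rw [norm_mul, Complex.norm_of_nonneg (hpos _)]
  rw [intervalIntegral.integral_mul_const, intervalIntegral.integral_mul_const, norm_mul,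
    intervalIntegral.integral_ofReal,
    Complex.norm_of_nonneg (intervalIntegral.integral_nonneg (by simp) fun v _ => hpos v)]

theorem Rc_eq_tsum_gaussian_add_tsum_signErfc (hx : ∀ n : ℤ, x ≠ n) :
    Rc t (ee x) =
      1 / (2 * π * I) * ∑' n : ℤ, cexp (-π * κ * (x + n) ^ 2) * ee (t * (x + n)) / (x + n) +
        1 / 2 * ∑' r : ℤ, signErfc (√(π / κ) * (t - r)) * ee (r * x) := by
  have hx1 : ee x - 1 ≠ 0 := sub_ne_zero.2 fun h => (ee_eq_one_iff.1 h).elim hx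
  have hterm (n : ℤ) :
      (ee x - 1) * (cexp (-π * κ * (x + n) ^ 2) * ee (t * (x + n)) / (x + n)) =
        2 * π * I * ∫ v in t..(t + 1), cexp (-π * κ * (x + n) ^ 2) * ee (v * (x + n)) := by
    have hxn : x + n ≠ 0 := fun h => hx (-n) (by push_cast; exact eq_neg_of_add_eq_zero_left h)
    have h := ee_sub_one_mul_ee_div hxn t
    rw [ee_add_intCast] at h
    rw [intervalIntegral.integral_const_mul]
    linear_combination cexp (-π * κ * (x + n) ^ 2) * h
  have hpoisson (v : ℝ) : ∑' n : ℤ, cexp (-π * κ * (x + n) ^ 2) * ee (v * (x + n)) =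
      ∑' r : ℤ, (1 / √κ * Real.exp (-π / κ * (r - v) ^ 2) : ℝ) * ee (r * x) := by
    rw [tsum_gaussian_mul_ee (by simpa using hκ), Real.sqrt_eq_rpow]
    push_cast [Complex.ofReal_cpow hκ.le]
    rfl
  have hmain : (ee x - 1) *
      ∑' n : ℤ, cexp (-π * κ * (x + n) ^ 2) * ee (t * (x + n)) / (x + n) =
        2 * π * I * ((ee x - 1) * (Rc t (ee x) -
          1 / 2 * ∑' r : ℤ, signErfc (√(π / κ) * (t - r)) * ee (r * x))) := by
    rw [← tsum_mul_left, tsum_congr hterm, tsum_mul_left,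
      (hasSum_integral_gaussian_mul_ee hκ t x).tsum_eq]
    simp_rw [hpoisson, integral_tsum_dual_gaussian_mul_ee hκ t x hx]
  rw [mul_left_comm, mul_right_inj' hx1] at hmain
  rw [hmain]
  field [Complex.two_pi_I_ne_zero]

end PartialFractions

section GaussianCauchyKernel

/-- The Cauchy kernel `1 / (z - w)` damped by the Gaussian `e^{-πκ(|w|² - 2z·conj w + z²)}`. It is
meromorphic in `z` and of absolute value `e^{-πκ(|w - z|² - 2 Im(z)²)} / |z - w|`. -/
def gaussianCauchyKernel (κ : ℝ) (z w : ℂ) : ℂ :=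
  cexp (-π * κ * (w * conj w - 2 * z * conj w + z ^ 2)) / (z - w)

lemma gaussianCauchyKernel_eq (κ : ℝ) (z w : ℂ) :
    gaussianCauchyKernel κ z w =
      cexp (-π * κ * (z - w) ^ 2) * cexp (-π * κ * ((w - conj w) * (2 * z - w))) / (z - w) := by
  rw [gaussianCauchyKernel, ← Complex.exp_add]
  ring_nf

lemma norm_gaussianCauchyKernel (κ : ℝ) (z w : ℂ) :
    ‖gaussianCauchyKernel κ z w‖ =
      Real.exp (-π * κ * (‖w - z‖ ^ 2 - 2 * z.im ^ 2)) / ‖z - w‖ := by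
  rw [gaussianCauchyKernel, norm_div, Complex.norm_exp, ← Complex.normSq_eq_norm_sq]
  have hre : (w * conj w - 2 * z * conj w + z ^ 2).re = normSq (w - z) - 2 * z.im ^ 2 := by
    simp [Complex.normSq_apply, sq]
    ring
  rw [← hre, ← Complex.re_ofReal_mul]
  push_cast
  rfl

lemma gaussianCauchyKernel_add_add (κ : ℝ) (z w v : ℂ) :
    gaussianCauchyKernel κ (z + v) (w + v) =
      cexp (-π * κ * (w * conj v - v * conj w + (v - conj v) * (2 * z + v))) *
        gaussianCauchyKernel κ z w := by
  rw [gaussianCauchyKernel, gaussianCauchyKernel, mul_div_assoc', ← Complex.exp_add, map_add,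
    add_sub_add_right_eq_sub]
  ring_nf

lemma gaussianCauchyKernel_div_div (κ : ℝ) (z w : ℂ) {j : ℂ} (hj : j ≠ 0) :
    gaussianCauchyKernel (κ * normSq j) (z / j) (w / j) =
      j * cexp (-π * κ * (z ^ 2 * (conj j - j) / j)) * gaussianCauchyKernel κ z w := by
  have hj' : conj j ≠ 0 := (map_ne_zero _).2 hj
  have hexp : -π * (κ * normSq j : ℝ) *
      (w / j * conj (w / j) - 2 * (z / j) * conj (w / j) + (z / j) ^ 2) =
        -π * κ * (z ^ 2 * (conj j - j) / j) +
          -π * κ * (w * conj w - 2 * z * conj w + z ^ 2) := by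
    rw [map_div₀, Complex.ofReal_mul, Complex.normSq_eq_conj_mul_self]
    field
  rw [gaussianCauchyKernel, gaussianCauchyKernel, hexp, Complex.exp_add, ← sub_div]
  field

end GaussianCauchyKernel

section LatticeSum

/-- The `(k, n)`-th summand of the Appell–Lerch lattice sum: the Gaussian-damped Cauchy kernel at
the translate `(α - k)τ + (β - n)` of `ατ + β`, times the phase that makes the summands permute
under integral shifts of the characteristic `(α, β)`. -/
def latticeTerm (m α β : ℝ) (τ z : ℂ) (p : ℤ × ℤ) : ℂ :=
  ee (m * (β * p.1 - α * p.2)) *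
    gaussianCauchyKernel (m / τ.im) z ((α - p.1) * τ + (β - p.2))

/-- The lattice sum that equals `2πi` times the completed Appell–Lerch sum of index `m` and
characteristic `(α, β)`. -/
def latticeSum (m α β : ℝ) (τ z : ℂ) : ℂ := ∑' p, latticeTerm m α β τ z p

lemma conj_real_mul_add_real (u y : ℝ) (τ : ℂ) :
    conj (u * τ + y) = u * τ + y - 2 * I * τ.im * u := by
  apply Complex.ext <;> simp
  ring

lemma cexp_neg_pi_mul_eq_ee {τ : ℂ} (hτ : τ.im ≠ 0) (m : ℝ) (x : ℂ) :
    cexp (-π * (m / τ.im : ℝ) * (2 * I * τ.im * x)) = ee (-m * x) := by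
  have hτ' : (τ.im : ℂ) ≠ 0 := mod_cast hτ
  rw [ee]
  push_cast
  congr 1
  field

lemma gaussianCauchyKernel_real_mul_add_real {τ : ℂ} (hτ : τ.im ≠ 0) (m : ℝ) (z : ℂ) (u y : ℝ) :
    gaussianCauchyKernel (m / τ.im) z (u * τ + y) =
      cexp (-π * (m / τ.im : ℝ) * (z - (u * τ + y)) ^ 2) *
        ee (-m * (u * (2 * z - (u * τ + y)))) / (z - (u * τ + y)) := by
  rw [gaussianCauchyKernel_eq, conj_real_mul_add_real, ← cexp_neg_pi_mul_eq_ee hτ]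
  ring_nf

lemma gaussianCauchyKernel_translate {τ : ℂ} (hτ : τ.im ≠ 0) (m : ℝ) (z : ℂ) (u y a b : ℝ) :
    gaussianCauchyKernel (m / τ.im) (z + (a * τ + b)) (u * τ + y + (a * τ + b)) =
      ee (-m * (a ^ 2 * τ + 2 * a * z + (u * b - y * a + a * b))) *
        gaussianCauchyKernel (m / τ.im) z (u * τ + y) := by
  rw [gaussianCauchyKernel_add_add, conj_real_mul_add_real, conj_real_mul_add_real,
    ← cexp_neg_pi_mul_eq_ee hτ]
  ring_nf

lemma im_moebius (a b c d : ℝ) (τ : ℂ) :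
    ((a * τ + b) / (c * τ + d)).im = (a * d - b * c) * τ.im / normSq (c * τ + d) := by
  rw [Complex.div_im, ← sub_div]
  simp
  ring

lemma mul_add_ne_zero_of_det_eq_one {τ : ℂ} (hτ : τ.im ≠ 0) {a b c d : ℝ}
    (h : a * d - b * c = 1) : (c * τ + d : ℂ) ≠ 0 := by
  refine UpperHalfPlane.linear_ne_zero_of_im (cd := ![c, d]) hτ fun hcd => ?_
  obtain ⟨rfl, rfl⟩ : c = 0 ∧ d = 0 := ⟨congrFun hcd 0, congrFun hcd 1⟩
  simp at h

lemma gaussianCauchyKernel_moebius {τ : ℂ} (hτ : τ.im ≠ 0) (m : ℝ) (z w : ℂ) {a b c d : ℝ}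
    (h : a * d - b * c = 1) :
    gaussianCauchyKernel (m / ((a * τ + b) / (c * τ + d)).im) (z / (c * τ + d)) (w / (c * τ + d)) =
      (c * τ + d) * ee (m * c * z ^ 2 / (c * τ + d)) * gaussianCauchyKernel (m / τ.im) z w := by
  have hj : (c * τ + d : ℂ) ≠ 0 := mul_add_ne_zero_of_det_eq_one hτ h
  have hexp : (m * c * z ^ 2 / (c * τ + d) : ℂ) = -m * -(c * z ^ 2 / (c * τ + d)) := by ring
  rw [im_moebius, h, one_mul, div_div_eq_mul_div, mul_div_right_comm,
    gaussianCauchyKernel_div_div _ _ _ hj, conj_real_mul_add_real, hexp,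
    ← cexp_neg_pi_mul_eq_ee hτ]
  ring_nf

lemma latticeSum_add_intCast (m : ℤ) (α β : ℝ) (τ z : ℂ) (a b : ℤ) :
    latticeSum m (α + a) (β + b) τ z = ee (-m * (b * α - a * β)) * latticeSum m α β τ z := by
  rw [latticeSum, latticeSum, ← (Equiv.addRight (a, b)).tsum_eq, ← tsum_mul_left]
  refine tsum_congr fun ⟨k, n⟩ => ?_
  simp only [latticeTerm, Equiv.coe_addRight, Prod.mk_add_mk]
  rw [← mul_assoc, ← ee_add, ← ee_add_intCast _ (m * (a * n - b * k))]
  push_cast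
  ring_nf

lemma latticeSum_add_lattice (m : ℤ) (α β : ℝ) {τ : ℂ} (hτ : τ.im ≠ 0) (z : ℂ) (a b : ℤ) :
    latticeSum m α β τ (z + a * τ + b) =
      ee (-m * (a ^ 2 * τ + 2 * a * z)) * latticeSum m α β τ z := by
  rw [latticeSum, latticeSum, ← (Equiv.subRight (a, b)).tsum_eq, ← tsum_mul_left]
  refine tsum_congr fun ⟨k, n⟩ => ?_
  have h := gaussianCauchyKernel_translate hτ m z (α - k) (β - n) a b
  have hpoint : (α - k + a) * τ + (β - n + b) = (α - k) * τ + (β - n) + (a * τ + b) := by ring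
  simp only [latticeTerm, Equiv.subRight_apply, Prod.mk_sub_mk]
  push_cast at h ⊢
  rw [← sub_add, ← sub_add, hpoint, add_assoc z, h, ← mul_assoc, ← mul_assoc, ← ee_add, ← ee_add,
    ← ee_add_intCast _ (m * (n * a - k * b + a * b))]
  push_cast
  ring_nf

/-- Right multiplication of row vectors by a matrix `(a, b; c, d)` of determinant `1`. -/
def slEquiv (a b c d : ℤ) (h : a * d - b * c = 1) : ℤ × ℤ ≃ ℤ × ℤ where
  toFun p := (p.1 * a + p.2 * c, p.1 * b + p.2 * d)
  invFun p := (p.1 * d - p.2 * c, -p.1 * b + p.2 * a)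
  left_inv p := by
    ext
    · linear_combination p.1 * h
    · linear_combination p.2 * h
  right_inv p := by
    ext
    · linear_combination p.1 * h
    · linear_combination p.2 * h

lemma latticeSum_moebius (m α β : ℝ) {τ : ℂ} (hτ : τ.im ≠ 0) (z : ℂ) {a b c d : ℤ}
    (h : a * d - b * c = 1) :
    latticeSum m α β ((a * τ + b) / (c * τ + d)) (z / (c * τ + d)) =
      (c * τ + d) * ee (m * c * z ^ 2 / (c * τ + d)) *
        latticeSum m (α * a + β * c) (α * b + β * d) τ z := by
  have hdet : (a * d - b * c : ℝ) = 1 := mod_cast h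
  have hj : (c * τ + d : ℂ) ≠ 0 := mod_cast mul_add_ne_zero_of_det_eq_one hτ hdet
  have hpoint (p : ℤ × ℤ) : (α - p.1) * ((a * τ + b) / (c * τ + d)) + (β - p.2) =
      ((α * a + β * c - (p.1 * a + p.2 * c)) * τ + (α * b + β * d - (p.1 * b + p.2 * d))) /
        (c * τ + d) := by
    rw [eq_div_iff hj]
    linear_combination (α - p.1) * div_mul_cancel₀ (a * τ + b) hj
  have hphase (p : ℤ × ℤ) : (β * p.1 - α * p.2 : ℂ) =
      (α * b + β * d) * (p.1 * a + p.2 * c) - (α * a + β * c) * (p.1 * b + p.2 * d) := by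
    linear_combination -(β * p.1 - α * p.2) * (mod_cast h : (a * d - b * c : ℂ) = 1)
  rw [latticeSum, latticeSum, ← tsum_mul_left,
    ← (slEquiv a b c d h).tsum_eq fun p => _ * latticeTerm _ _ _ _ _ p]
  refine tsum_congr fun p => ?_
  have hkernel := gaussianCauchyKernel_moebius hτ m z
    ((α * a + β * c - (p.1 * a + p.2 * c)) * τ + (α * b + β * d - (p.1 * b + p.2 * d))) hdet
  simp only [latticeTerm, slEquiv, Equiv.coe_fn_mk]
  push_cast at hkernel ⊢
  rw [hpoint, hkernel, hphase]
  ring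

lemma summable_latticeTerm {m : ℝ} (hm : 0 < m) (α β : ℝ) {τ : ℂ} (hτ : 0 < τ.im) (z : ℂ) :
    Summable (latticeTerm m α β τ z) := by
  have hc : 0 < π * (m / τ.im) := by positivity
  have hdist (p : ℤ × ℤ) : ‖(α - p.1) * τ + (β - p.2) - z‖ = ‖p.1 * τ + p.2 + (z - α * τ - β)‖ := by
    rw [← norm_neg]
    ring_nf
  have hfar : ∀ᶠ p : ℤ × ℤ in cofinite, 1 ≤ ‖(α - p.1) * τ + (β - p.2) - z‖ := by
    have h := summable_exp_neg_norm_sq_lattice hτ one_pos (z - α * τ - β)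
    filter_upwards [h.tendsto_cofinite_zero.eventually_lt_const (Real.exp_pos (-1))] with p hp
    rw [hdist]
    rw [Real.exp_lt_exp] at hp
    nlinarith [norm_nonneg (p.1 * τ + p.2 + (z - α * τ - β))]
  refine .of_norm_bounded_eventually ((summable_exp_neg_norm_sq_lattice hτ hc
    (z - α * τ - β)).mul_left (Real.exp (2 * (π * (m / τ.im)) * z.im ^ 2))) ?_
  filter_upwards [hfar] with p hp
  have hphase : ‖ee (m * (β * p.1 - α * p.2))‖ = 1 := by simp [norm_ee]
  rw [latticeTerm, norm_mul, hphase, one_mul, norm_gaussianCauchyKernel, norm_sub_rev z,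
    ← Real.exp_add]
  refine (div_le_self (Real.exp_nonneg _) hp).trans_eq ?_
  rw [hdist]
  ring_nf

end LatticeSum

section ResidueClasses

lemma hasSum_sum_residues {E : Type*} [NormedAddCommGroup E] [CompleteSpace E] {N : ℕ}
    (hN : N ≠ 0) {f : ℤ → E} (hf : Summable f) :
    HasSum f (∑ l ∈ Finset.range N, ∑' n : ℤ, f (l + N * n)) := by
  have : NeZero N := ⟨hN⟩
  let e : Fin N × ℤ ≃ ℤ := (Equiv.prodComm _ _).trans (Int.divModEquiv N).symm
  have he (p : Fin N × ℤ) : e p = p.1 + N * p.2 := by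
    simp [e, mul_comm, add_comm]
  have hfe : Summable (f ∘ e) := e.summable_iff.2 hf
  rw [Finset.sum_range, ← e.hasSum_iff]
  convert hfe.hasSum using 1
  rw [hfe.tsum_prod, tsum_fintype]
  simp [he]

lemma hasSum_tsum_mul_residues {R : Type*} [NormedRing R] [CompleteSpace R] {N : ℕ} (hN : N ≠ 0)
    {g h : ℤ → R} (hg : Summable fun r => ‖g r‖) (hh : Summable fun r => ‖h r‖) :
    HasSum (fun k : ℤ => ∑' r, h r * g (r + N * k))
      (∑ l ∈ Finset.range N, (∑' n : ℤ, h (l + N * n)) * ∑' n : ℤ, g (l + N * n)) := by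
  have hN' : (N : ℤ) ≠ 0 := mod_cast hN
  have hinj : Function.Injective fun p : ℤ × ℤ => (p.1, p.1 + N * p.2) := by
    rintro ⟨r, k⟩ ⟨r', k'⟩ hp
    obtain ⟨hr, hk⟩ := Prod.mk.inj hp
    dsimp only at hr hk
    rw [hr] at hk ⊢
    rw [mul_left_cancel₀ hN' (add_left_cancel hk)]
  have hsum : Summable fun p : ℤ × ℤ => h p.1 * g (p.1 + N * p.2) := by
    simpa only [Function.comp_def] using
      (summable_mul_of_summable_norm hh hg).comp_injective hinj
  have hclass {f : ℤ → R} (hf : Summable fun r => ‖f r‖) (l : ℕ) :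
      Summable fun n : ℤ => f (l + N * n) :=
    hf.of_norm.comp_injective (i := fun n : ℤ => (l + N * n : ℤ))
      ((add_right_injective _).comp (mul_right_injective₀ hN'))
  have hshift (l : ℕ) (n : ℤ) : ∑' k : ℤ, h (l + N * n) * g (l + N * n + N * k) =
      h (l + N * n) * ∑' k : ℤ, g (l + N * k) := by
    rw [← (hclass hg l).tsum_mul_left,
      ← (Equiv.addLeft n).tsum_eq fun k : ℤ => h (l + N * n) * g (l + N * k)]
    simp only [Equiv.coe_addLeft, mul_add, add_assoc]
  have hvalue : ∑' k : ℤ, ∑' r : ℤ, h r * g (r + N * k) =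
      ∑ l ∈ Finset.range N, (∑' n : ℤ, h (l + N * n)) * ∑' n : ℤ, g (l + N * n) := by
    rw [Summable.tsum_comm (f := fun r k : ℤ => h r * g (r + N * k)) hsum,
      (hasSum_sum_residues hN hsum.prod).tsum_eq]
    exact Finset.sum_congr rfl fun l _ =>
      (tsum_congr (hshift l)).trans ((hclass hh l).tsum_mul_right _)
  rw [← hvalue]
  exact hsum.prod_symm.prod.hasSum

end ResidueClasses

section ThetaDecomposition

/-- The term `q^{r²/4m} y^r` of the theta functions `θ_{m,ℓ}`, `ℓ ≡ r (mod 2m)`. -/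
def thetaCoeff (m : ℕ) (τ z : ℂ) (r : ℤ) : ℂ := ee (r ^ 2 / (4 * m) * τ + r * z)

/-- The summand of `Θ^{s,*}_{m,ℓ}`, `ℓ ≡ r (mod 2m)`, at `λ = α + r/2m`. -/
def eichlerCoeff (m : ℕ) (s : ℚ × ℚ) (τ : ℂ) (r : ℤ) : ℂ :=
  1 / 2 * signErfc (2 * √(π * m * τ.im) * lamVal m s r 0) *
    ee (m * s.1 * s.2 - 2 * m * s.2 * lamVal m s r 0 - m * lamVal m s r 0 ^ 2 * τ)

variable {m : ℕ} (hm : 0 < m) (s : ℚ × ℚ) {τ : ℂ} (hτ : 0 < τ.im) (z : ℂ)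

lemma jTheta_eq_tsum_thetaCoeff (l : ℤ) :
    jTheta m l τ z = ∑' n : ℤ, thetaCoeff m τ z (l + (2 * m : ℕ) * n) := by
  simp [jTheta, thetaCoeff]

include hm hτ

lemma ThStar_eq_tsum_eichlerCoeff (l : ℤ) :
    ThStar m s l τ = ∑' n : ℤ, eichlerCoeff m s τ (l + (2 * m : ℕ) * n) := by
  have : (0 : ℝ) < m := mod_cast hm
  have hc : 0 < 2 * √(π * m * τ.im) := by positivity
  have hlam (n : ℤ) : lamVal m s (l + (2 * m : ℕ) * n) 0 = lamVal m s l n := by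
    simp only [lamVal]
    push_cast
    field
  rw [ThStar, ← tsum_mul_left]
  refine tsum_congr fun n => ?_
  rw [eichlerCoeff, hlam, signErfc, sign_mul_of_pos_left hc, abs_mul, abs_of_pos hc,
    sub_eq_add_neg, sub_eq_add_neg, ee_add, ee_add, mul_right_comm 2]
  push_cast
  ring_nf

lemma summable_norm_thetaCoeff : Summable fun r => ‖thetaCoeff m τ z r‖ := by
  have : (0 : ℝ) < m := mod_cast hm
  refine (summable_exp_neg_quadratic (a := π * τ.im / (2 * m)) (by positivity)
    (-2 * π * z.im) 0).congr fun r => ?_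
  have him : ((r : ℂ) ^ 2 / (4 * m) * τ + r * z).im = (r : ℝ) ^ 2 / (4 * m) * τ.im + r * z.im := by
    rw [← Complex.im_ofReal_mul, ← Complex.im_ofReal_mul, ← Complex.add_im]
    push_cast
    rfl
  rw [thetaCoeff, norm_ee, him]
  field_simp
  ring_nf

lemma summable_norm_eichlerCoeff : Summable fun r => ‖eichlerCoeff m s τ r‖ := by
  have : (0 : ℝ) < m := mod_cast hm
  refine .of_nonneg_of_le (fun _ => norm_nonneg _) (fun r => ?_) (summable_exp_neg_quadratic
    (a := π * τ.im / (2 * m)) (by positivity) (-2 * π * τ.im * s.1) (-2 * π * m * τ.im * s.1 ^ 2))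
  set v := lamVal m s r 0 with hv
  have him : (m * s.1 * s.2 - 2 * m * s.2 * v - m * v ^ 2 * τ : ℂ).im = -(m * v ^ 2 * τ.im) := by
    simp [sq]
  have hexp : -(2 * √(π * m * τ.im) * v) ^ 2 + -2 * π * -(m * v ^ 2 * τ.im) =
      -(π * τ.im / (2 * m)) * r ^ 2 + -2 * π * τ.im * s.1 * r + -2 * π * m * τ.im * s.1 ^ 2 := by
    rw [mul_pow, mul_pow, Real.sq_sqrt (by positivity), hv, lamVal]
    field_simp
    push_cast
    ring
  rw [eichlerCoeff, norm_mul, norm_mul, norm_ee, him, ← hexp, Real.exp_add, Complex.norm_real]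
  gcongr
  refine (mul_le_of_le_one_left (norm_nonneg _) (by norm_num)).trans ?_
  exact abs_signErfc_le _

lemma hasSum_tsum_eichlerCoeff_mul_thetaCoeff :
    HasSum (fun k : ℤ => ∑' r : ℤ, eichlerCoeff m s τ r * thetaCoeff m τ z (r + 2 * m * k))
      (∑ l ∈ Finset.range (2 * m), ThStar m s l τ * jTheta m l τ z) := by
  have h := hasSum_tsum_mul_residues (N := 2 * m) (by lia) (summable_norm_thetaCoeff hm hτ z)
    (summable_norm_eichlerCoeff hm s hτ)
  simp_rw [← ThStar_eq_tsum_eichlerCoeff hm s hτ, ← jTheta_eq_tsum_thetaCoeff] at h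
  exact_mod_cast h

end ThetaDecomposition

section Completion

/-- The factor `e(-mα z_s) q^{mk²} y^{2mk}` of the `k`-th summand of `A^s_m`. -/
def appellFactor (m : ℕ) (s : ℚ × ℚ) (τ z : ℂ) (k : ℤ) : ℂ :=
  ee (-m * s.1 * zpt s τ + (m * k ^ 2 * τ + 2 * m * k * z))

variable {m : ℕ} (hm : 0 < m) (s : ℚ × ℚ) {τ : ℂ} (hτ : 0 < τ.im) (z : ℂ)

include hm in
lemma appellFactor_mul_signErfc (k r : ℤ) :
    appellFactor m s τ z k * (1 / 2 * (signErfc (√(π / (m / τ.im)) *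
        (((-(2 * m * s.1) : ℚ) : ℝ) - r)) * ee (r * (z - zpt s τ + k * τ)))) =
      -(eichlerCoeff m s τ r * thetaCoeff m τ z (r + 2 * m * k)) := by
  have hm' : (0 : ℝ) < m := mod_cast hm
  have hroot : √(π / (m / τ.im)) * (((-(2 * m * s.1) : ℚ) : ℝ) - r) =
      -(2 * √(π * m * τ.im) * lamVal m s r 0) := by
    have h : √(π * m * τ.im) = m * √(π / (m / τ.im)) := by
      rw [show π * m * τ.im = m ^ 2 * (π / (m / τ.im)) by field, Real.sqrt_mul (sq_nonneg _),
        Real.sqrt_sq hm'.le]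
    rw [h, lamVal]
    push_cast
    field
  have hphase : appellFactor m s τ z k * ee (r * (z - zpt s τ + k * τ)) =
      ee (m * s.1 * s.2 - 2 * m * s.2 * lamVal m s r 0 - m * lamVal m s r 0 ^ 2 * τ) *
        thetaCoeff m τ z (r + 2 * m * k) := by
    have hm0 : (m : ℂ) ≠ 0 := mod_cast hm.ne'
    rw [appellFactor, thetaCoeff, ← ee_add, ← ee_add, zpt, lamVal]
    congr 1
    push_cast
    field
  rw [hroot, signErfc_neg, eichlerCoeff]
  push_cast
  linear_combination -(1 / 2 * signErfc (2 * √(π * m * τ.im) * lamVal m s r 0) : ℂ) * hphase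

include hτ

lemma appellFactor_mul_gaussian (k n : ℤ) :
    appellFactor m s τ z k * (cexp (-π * (m / τ.im : ℝ) * (z - zpt s τ + k * τ + n) ^ 2) *
        ee ((-(2 * m * s.1) : ℚ) * (z - zpt s τ + k * τ + n)) / (z - zpt s τ + k * τ + n)) =
      latticeTerm m s.1 s.2 τ z (k, n) := by
  have hkernel := gaussianCauchyKernel_real_mul_add_real hτ.ne' m z (s.1 - k) (s.2 - n)
  have hpoint : z - ((s.1 - k) * τ + (s.2 - n)) = z - zpt s τ + k * τ + n := by
    rw [zpt]
    ring
  have hphase : appellFactor m s τ z k * ee ((-(2 * m * s.1) : ℚ) * (z - zpt s τ + k * τ + n)) =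
      ee (m * (s.2 * k - s.1 * n)) *
        ee (-m * ((s.1 - k) * (2 * z - ((s.1 - k) * τ + (s.2 - n))))) := by
    rw [appellFactor, ← ee_add, ← ee_add, ← ee_add_intCast _ (m * k * n), zpt]
    push_cast
    ring_nf
  simp only [latticeTerm]
  push_cast at hkernel hphase ⊢
  rw [hkernel, hpoint]
  linear_combination cexp (-π * (m / τ.im) * (z - zpt s τ + k * τ + n) ^ 2) /
    (z - zpt s τ + k * τ + n) * hphase

include hm

lemma appellFactor_mul_Rc (hz : ∀ a b : ℤ, z ≠ zpt s τ + a * τ + b) (k : ℤ) :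
    appellFactor m s τ z k * Rc (-(2 * m * s.1) : ℚ) (ee (z - zpt s τ + k * τ)) =
      1 / (2 * π * I) * ∑' n : ℤ, latticeTerm m s.1 s.2 τ z (k, n) -
        ∑' r : ℤ, eichlerCoeff m s τ r * thetaCoeff m τ z (r + 2 * m * k) := by
  have hm' : (0 : ℝ) < m := mod_cast hm
  have hx (n : ℤ) : z - zpt s τ + k * τ ≠ n := fun h =>
    hz (-k) n (by push_cast; linear_combination h)
  rw [sub_eq_add_neg (_ * _), ← tsum_neg,
    Rc_eq_tsum_gaussian_add_tsum_signErfc (div_pos hm' hτ) _ _ hx, mul_add, mul_left_comm,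
    ← tsum_mul_left, ← tsum_mul_left (a := 1 / 2), ← tsum_mul_left (a := appellFactor m s τ z k)]
  congr 2
  · exact tsum_congr fun n => mod_cast appellFactor_mul_gaussian s hτ z k n
  · exact funext fun r => appellFactor_mul_signErfc hm s z k r

theorem AhatA_eq_latticeSum (hz : ∀ a b : ℤ, z ≠ zpt s τ + a * τ + b) :
    AhatA m s τ z = 1 / (2 * π * I) * latticeSum m s.1 s.2 τ z := by
  have hm' : (0 : ℝ) < m := mod_cast hm
  have hlattice := summable_latticeTerm hm' s.1 s.2 hτ z
  have hrows : AppellA m s τ z = ∑' k : ℤ, appellFactor m s τ z k *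
      Rc (-(2 * m * s.1) : ℚ) (ee (z - zpt s τ + k * τ)) := by
    rw [AppellA, Av, ← tsum_mul_left]
    refine tsum_congr fun k => ?_
    have hx : ee (k * τ + z) / ee (zpt s τ) = ee (z - zpt s τ + k * τ) := by
      rw [div_eq_iff (ee_ne_zero _), ← ee_add]
      ring_nf
    rw [hx, ← mul_assoc, ← ee_add, appellFactor]
  have hsum := (hlattice.prod.hasSum.mul_left (1 / (2 * π * I))).sub
    (hasSum_tsum_eichlerCoeff_mul_thetaCoeff hm s hτ z)
  rw [AhatA, hrows, tsum_congr (appellFactor_mul_Rc hm s hτ z hz), hsum.tsum_eq, sub_add_cancel,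
    latticeSum, hlattice.tsum_prod]

end Completion

section Transformations

variable {m : ℕ} (hm : 0 < m) (s : ℚ × ℚ) {τ : ℂ} (hτ : 0 < τ.im) {z : ℂ}
include hm hτ

lemma AhatA_add_intCast (hz : ∀ a b : ℤ, z ≠ zpt s τ + a * τ + b) (lam mu : ℤ) :
    AhatA m (s.1 + lam, s.2 + mu) τ z = ee (-m * (mu * s.1 - lam * s.2)) * AhatA m s τ z := by
  have hz' (a b : ℤ) : z ≠ zpt (s.1 + lam, s.2 + mu) τ + a * τ + b := fun h =>
    hz (lam + a) (mu + b) (by rw [h, zpt, zpt]; push_cast; ring)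
  have h := latticeSum_add_intCast m s.1 s.2 τ z lam mu
  rw [AhatA_eq_latticeSum hm s hτ z hz, AhatA_eq_latticeSum hm _ hτ z hz', mul_left_comm]
  push_cast at h ⊢
  rw [h]

lemma AhatA_add_lattice (hz : ∀ a b : ℤ, z ≠ zpt s τ + a * τ + b) (lam mu : ℤ) :
    AhatA m s τ (z + lam * τ + mu) = ee (-m * (lam ^ 2 * τ + 2 * lam * z)) * AhatA m s τ z := by
  have hz' (a b : ℤ) : z + lam * τ + mu ≠ zpt s τ + a * τ + b := fun h =>
    hz (a - lam) (b - mu) (by push_cast; linear_combination h)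
  have h := latticeSum_add_lattice m s.1 s.2 hτ.ne' z lam mu
  rw [AhatA_eq_latticeSum hm s hτ z hz, AhatA_eq_latticeSum hm s hτ _ hz', mul_left_comm]
  push_cast at h ⊢
  rw [h]

lemma AhatA_moebius {a b c d : ℤ} (h : a * d - b * c = 1)
    (hz : ∀ i j : ℤ, z ≠ zpt (s.1 * a + s.2 * c, s.1 * b + s.2 * d) τ + i * τ + j) :
    AhatA m s ((a * τ + b) / (c * τ + d)) (z / (c * τ + d)) =
      (c * τ + d) * ee (m * c * z ^ 2 / (c * τ + d)) *
        AhatA m (s.1 * a + s.2 * c, s.1 * b + s.2 * d) τ z := by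
  have hdet : (a * d - b * c : ℝ) = 1 := mod_cast h
  have hj : (c * τ + d : ℂ) ≠ 0 := mod_cast mul_add_ne_zero_of_det_eq_one hτ.ne' hdet
  have him : 0 < ((a * τ + b) / (c * τ + d) : ℂ).im := by
    have him' := im_moebius a b c d τ
    push_cast at him'
    rw [him', hdet, one_mul]
    exact div_pos hτ (Complex.normSq_pos.2 hj)
  have hz' (i k : ℤ) : z / (c * τ + d) ≠
      zpt s ((a * τ + b) / (c * τ + d)) + i * ((a * τ + b) / (c * τ + d)) + k := by
    intro heq
    refine hz (i * a + k * c) (i * b + k * d) ?_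
    rw [div_eq_iff hj] at heq
    rw [heq, zpt, zpt]
    push_cast
    linear_combination (s.1 + i) * div_mul_cancel₀ (a * τ + b : ℂ) hj
  have hsum := latticeSum_moebius m s.1 s.2 hτ.ne' z h
  rw [AhatA_eq_latticeSum hm _ hτ z hz, AhatA_eq_latticeSum hm s him _ hz', mul_left_comm]
  push_cast at hsum ⊢
  rw [hsum]

end Transformations

/-- Theorem (Zwegers): the completed Appell–Lerch sum `Â^s_m` transforms like a Jacobi form
of weight 1 and index `m`: it has the stated behaviour under translation of `s` by `ℤ²`,
under elliptic transformations of `z`, and under `SL(2,ℤ)`. -/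
theorem completed_appell_lerch_transformations (m : ℕ) (hm : 0 < m) (s : ℚ × ℚ) :
    (∀ lam mu : ℤ, ∀ τ : ℂ, 0 < τ.im → ∀ z : ℂ,
      (∀ a b : ℤ, z ≠ zpt s τ + (a : ℂ) * τ + (b : ℂ)) →
      AhatA m (s.1 + (lam : ℚ), s.2 + (mu : ℚ)) τ z =
        ee (-(m : ℂ) * ((mu : ℂ) * (s.1 : ℚ) - (lam : ℂ) * (s.2 : ℚ))) * AhatA m s τ z) ∧
    (∀ lam mu : ℤ, ∀ τ : ℂ, 0 < τ.im → ∀ z : ℂ,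
      (∀ a b : ℤ, z ≠ zpt s τ + (a : ℂ) * τ + (b : ℂ)) →
      AhatA m s τ (z + (lam : ℂ) * τ + (mu : ℂ)) =
        ee (-(m : ℂ) * ((lam : ℂ) ^ 2 * τ + 2 * (lam : ℂ) * z)) * AhatA m s τ z) ∧
    (∀ a b c d : ℤ, a * d - b * c = 1 → ∀ τ : ℂ, 0 < τ.im → ∀ z : ℂ,
      (∀ i j : ℤ,
        z ≠ zpt (s.1 * (a : ℚ) + s.2 * (c : ℚ), s.1 * (b : ℚ) + s.2 * (d : ℚ)) τ +
          (i : ℂ) * τ + (j : ℂ)) →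
      AhatA m s (((a : ℂ) * τ + (b : ℂ)) / ((c : ℂ) * τ + (d : ℂ)))
          (z / ((c : ℂ) * τ + (d : ℂ))) =
        ((c : ℂ) * τ + (d : ℂ)) * ee ((m : ℂ) * (c : ℂ) * z ^ 2 / ((c : ℂ) * τ + (d : ℂ))) *
          AhatA m (s.1 * (a : ℚ) + s.2 * (c : ℚ), s.1 * (b : ℚ) + s.2 * (d : ℚ)) τ z) :=
  ⟨fun lam mu _ hτ _ hz => AhatA_add_intCast hm s hτ hz lam mu,
    fun lam mu _ hτ _ hz => AhatA_add_lattice hm s hτ hz lam mu,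
    fun _ _ _ _ hdet _ hτ _ hz => AhatA_moebius hm s hτ hdet hz⟩
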